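/- If 0 ≤ γ < n, p(·) ∈ 𝒞^{log}(ℝⁿ) ∩ 𝒫(ℝⁿ) and 1/q(x) = 1/p(x) − γ/n, then the constant weight ω ≡ 1 belongs to 𝒜_{p(·),q(·)}^γ, i.e., there is C such that ‖χ_Q‖_{q(·)} ‖χ_Q‖_{p'(·)} ≤ C |Q|^{1−γ/n} for every cube Q ⊂ ℝⁿ. -/

import Mathlib

open MeasureTheory ENNReal Set

/-- Axis-parallel cubes in `ℝⁿ`. -/
def IsCube {n : ℕ} (Q : Set (Fin n → ℝ)) : Prop :=
  ∃ (c : Fin n → ℝ) (r : ℝ), 0 < r ∧ Q = Set.univ.pi fun i => Set.Icc (c i) (c i + r)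

/-- The Luxemburg norm on the variable exponent Lebesgue space. -/
noncomputable def luxNorm {n : ℕ} (q : (Fin n → ℝ) → ℝ) (f : (Fin n → ℝ) → ℝ) : ℝ :=
  sInf {η : ℝ | 0 < η ∧
    ∫⁻ x, ENNReal.ofReal ((|f x| / η) ^ q x) ∂(volume : Measure (Fin n → ℝ)) ≤ 1}



noncomputable def aPart {n : ℕ} (q : (Fin n → ℝ) → ℝ) (Q : Set (Fin n → ℝ)) (η : ℝ) : (Fin n → ℝ) → ℝ≥0∞ :=
  (Q ∩ {x | 0 < q x}).indicator fun x => ENNReal.ofReal (η ^ (-q x))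

noncomputable def bPart {n : ℕ} (q : (Fin n → ℝ) → ℝ) (Q : Set (Fin n → ℝ)) (η : ℝ) : (Fin n → ℝ) → ℝ≥0∞ :=
  (Q ∩ {x | q x < 0}).indicator fun x => ENNReal.ofReal (η ^ (-q x))

lemma modular_eq {n : ℕ} (q : (Fin n → ℝ) → ℝ) (hq : Measurable q) (Q : Set (Fin n → ℝ))
    (hQ : MeasurableSet Q) (η : ℝ) (hη : 0 < η) :
    ∫⁻ x, ENNReal.ofReal ((|Q.indicator (fun _ => (1:ℝ)) x| / η) ^ q x) =
      volume {x | q x = 0} + (∫⁻ x, aPart q Q η x) + (∫⁻ x, bPart q Q η x) := by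
  have hm : Measurable fun x => ENNReal.ofReal (η ^ (-q x)) := by fun_prop
  have hz : MeasurableSet {x | q x = 0} := measurableSet_eq_fun hq measurable_const
  have hp : MeasurableSet {x | 0 < q x} := measurableSet_lt measurable_const hq
  have ha : Measurable (aPart q Q η) := hm.indicator (hQ.inter hp)
  have h1 : Measurable ({x | q x = 0}.indicator (fun _ => (1:ℝ≥0∞))) := measurable_const.indicator hz
  rw [← lintegral_indicator_one hz, ← lintegral_add_left (by exact h1), ← lintegral_add_left (by exact h1.add ha)]
  refine lintegral_congr fun x => ?_
  by_cases hx : x ∈ Q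
  · have e : (1 / η) ^ q x = η ^ (-q x) := by
      rw [one_div, Real.inv_rpow hη.le, Real.rpow_neg hη.le]
    rcases lt_trichotomy (q x) 0 with h | h | h
    · simp [aPart, bPart, indicator, hx, h, h.ne, e, not_lt.2 h.le, ← one_div]
    · simp [aPart, bPart, indicator, hx, h]
    · simp [aPart, bPart, indicator, hx, h, h.ne', e, not_lt.2 h.le, ← one_div]
  · by_cases h : q x = 0
    · simp [aPart, bPart, indicator, hx, h]
    · simp [aPart, bPart, indicator, hx, h]

lemma lux_le {n : ℕ} (q : (Fin n → ℝ) → ℝ) (hq : Measurable q) (Q : Set (Fin n → ℝ))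
    (hQ : MeasurableSet Q) (hneg : ∀ x, q x < 0 → q x ≤ -1) (η : ℝ) (hη : 0 < η) (ε : ℝ)
    (hε : volume {x | q x = 0} < 1 → ENNReal.ofReal ε ≤ (1 - volume {x | q x = 0}) / 2)
    (hA : (∫⁻ x, aPart q Q η x) ≤ ENNReal.ofReal ε) :
    luxNorm q (Q.indicator fun _ => (1:ℝ)) ≤ 2 * η := by
  have hbdd : BddBelow {η : ℝ | 0 < η ∧
      ∫⁻ x, ENNReal.ofReal ((|Q.indicator (fun _ => (1:ℝ)) x| / η) ^ q x) ≤ 1} :=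
    ⟨0, fun y hy => hy.1.le⟩
  unfold luxNorm
  rcases eq_empty_or_nonempty {η : ℝ | 0 < η ∧
      ∫⁻ x, ENNReal.ofReal ((|Q.indicator (fun _ => (1:ℝ)) x| / η) ^ q x) ≤ 1} with h | ⟨η0, h0⟩
  · rw [h, Real.sInf_empty]; positivity
  by_cases hle : η0 ≤ 2 * η
  · exact (csInf_le hbdd h0).trans hle
  push Not at hle
  refine (csInf_le hbdd (?_ : η ∈ _)).trans (by linarith)
  obtain ⟨h0p, h0⟩ := h0
  refine ⟨hη, ?_⟩
  rw [modular_eq q hq Q hQ _ h0p] at h0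
  rw [modular_eq q hq Q hQ _ hη]
  have hb : (∫⁻ x, bPart q Q η x) ≤ (∫⁻ x, bPart q Q η0 x) / 2 := by
    rw [ENNReal.div_eq_inv_mul, ← lintegral_const_mul' _ _ (by simp)]
    refine lintegral_mono fun x => ?_
    unfold bPart
    by_cases hx : x ∈ Q ∩ {x | q x < 0}
    · rw [indicator_of_mem hx, indicator_of_mem hx]
      have : (2:ℝ≥0∞)⁻¹ = ENNReal.ofReal (2⁻¹) := by
        rw [ENNReal.ofReal_inv_of_pos (by norm_num)]; simp
      rw [this, ← ENNReal.ofReal_mul (by norm_num)]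
      apply ENNReal.ofReal_le_ofReal
      have hq1 := hneg x hx.2
      calc η ^ (-q x) ≤ (2⁻¹ * η0) ^ (-q x) :=
            Real.rpow_le_rpow hη.le (by linarith) (by linarith)
        _ = 2⁻¹ ^ (-q x) * η0 ^ (-q x) := Real.mul_rpow (by norm_num) h0p.le
        _ ≤ 2⁻¹ * η0 ^ (-q x) := by
            gcongr
            calc (2⁻¹:ℝ) ^ (-q x) ≤ 2⁻¹ ^ (1:ℝ) :=
                  Real.rpow_le_rpow_of_exponent_ge (by norm_num) (by norm_num) (by linarith)
              _ = 2⁻¹ := by simp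
    · rw [indicator_of_notMem hx]; simp
  set c := volume {x | q x = 0} with hc
  by_cases hc1 : c < 1
  · have hb0 : (∫⁻ x, bPart q Q η0 x) ≤ 1 - c := by
      refine ENNReal.le_sub_of_add_le_left hc1.ne_top (le_trans ?_ h0)
      gcongr
      exact le_self_add
    calc c + (∫⁻ x, aPart q Q η x) + (∫⁻ x, bPart q Q η x)
        ≤ c + (1 - c) / 2 + (1 - c) / 2 := by
          gcongr
          · exact hA.trans (hε hc1)
          · exact hb.trans (by gcongr)
      _ = c + (1 - c) := by rw [add_assoc, ENNReal.add_halves]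
      _ = 1 := add_tsub_cancel_of_le hc1.le
  · push Not at hc1
    have hce : c = 1 := le_antisymm (le_trans (le_trans le_self_add le_self_add) h0) hc1
    rw [hce, add_assoc] at h0
    have hz : (∫⁻ x, aPart q Q η0 x) + (∫⁻ x, bPart q Q η0 x) = 0 := by
      have h2 : (1:ℝ≥0∞) + ((∫⁻ x, aPart q Q η0 x) + (∫⁻ x, bPart q Q η0 x)) ≤ 1 + 0 := by simpa using h0
      simpa using (ENNReal.add_le_add_iff_left ENNReal.one_ne_top).1 h2
    rw [add_eq_zero] at hz
    have hm : Measurable (aPart q Q η0) := by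
      have hm : Measurable fun x => ENNReal.ofReal (η0 ^ (-q x)) := by fun_prop
      exact hm.indicator (hQ.inter (measurableSet_lt measurable_const hq))
    have ha0 : (∫⁻ x, aPart q Q η x) = 0 := by
      have h3 := (lintegral_eq_zero_iff hm).1 hz.1
      have : aPart q Q η =ᵐ[volume] 0 := by
        filter_upwards [h3] with x hx
        unfold aPart at hx ⊢
        by_cases hxx : x ∈ Q ∩ {x | 0 < q x}
        · rw [indicator_of_mem hxx] at hx
          have := Real.rpow_pos_of_pos h0p (-q x)
          simp at hx; linarith
        · rw [indicator_of_notMem hxx]; rfl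
      rw [lintegral_congr_ae this]; simp
    have hb0 : (∫⁻ x, bPart q Q η x) = 0 := by
      rw [hz.2] at hb; simpa using hb
    rw [ha0, hb0, hce]; simp

lemma cube_vol {n : ℕ} (c : Fin n → ℝ) (r : ℝ) (hr : 0 < r) :
    volume (Set.univ.pi fun i => Set.Icc (c i) (c i + r)) = ENNReal.ofReal (r ^ n) := by
  rw [Set.pi_univ_Icc c (fun i => c i + r), Real.volume_Icc_pi]
  simp [ENNReal.ofReal_pow hr.le]

lemma cube_meas {n : ℕ} (c : Fin n → ℝ) (r : ℝ) :
    MeasurableSet (Set.univ.pi fun i => Set.Icc (c i) (c i + r)) :=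
  MeasurableSet.univ_pi fun _ => measurableSet_Icc

lemma cube_dist {n : ℕ} (c : Fin n → ℝ) (r : ℝ) (hr : 0 < r) (x : Fin n → ℝ)
    (hx : x ∈ Set.univ.pi fun i => Set.Icc (c i) (c i + r)) : dist x c ≤ r := by
  rw [dist_pi_le_iff hr.le]
  intro i
  have := hx i (mem_univ i)
  rw [Real.dist_eq, abs_le]
  constructor <;> linarith [this.1, this.2]

lemma aPart_bound {n : ℕ} (β : (Fin n → ℝ) → ℝ) (Q : Set (Fin n → ℝ)) (hQ : MeasurableSet Q) (l : ℝ)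
    (g : (Fin n → ℝ) → ℝ≥0∞)
    (h : ∀ x ∈ Q, 0 < β x → ENNReal.ofReal (Real.exp (-(l / β x))) ≤ g x) :
    (∫⁻ x, aPart (fun x => (β x)⁻¹) Q (Real.exp l) x) ≤ ∫⁻ x in Q, g x := by
  rw [← lintegral_indicator hQ]
  refine lintegral_mono fun x => ?_
  unfold aPart
  by_cases hx : x ∈ Q ∩ {x | 0 < (β x)⁻¹}
  · rw [indicator_of_mem hx, indicator_of_mem hx.1]
    convert h x hx.1 (inv_pos.1 hx.2) using 2
    rw [← Real.exp_mul]; ring_nf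
  · rw [indicator_of_notMem hx]; simp

lemma lux_le' {n : ℕ} (β : (Fin n → ℝ) → ℝ) (hβ : Measurable β) (hb1 : ∀ x, |β x| ≤ 1)
    (Q : Set (Fin n → ℝ)) (hQ : MeasurableSet Q) (l ε : ℝ)
    (hε : volume {x | (β x)⁻¹ = 0} < 1 → ENNReal.ofReal ε ≤ (1 - volume {x | (β x)⁻¹ = 0}) / 2)
    (g : (Fin n → ℝ) → ℝ≥0∞)
    (h : ∀ x ∈ Q, 0 < β x → ENNReal.ofReal (Real.exp (-(l / β x))) ≤ g x)
    (hg : ∫⁻ x in Q, g x ≤ ENNReal.ofReal ε) :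
    luxNorm (fun x => (β x)⁻¹) (Q.indicator fun _ => (1:ℝ)) ≤ 2 * Real.exp l := by
  refine lux_le _ hβ.inv Q hQ ?_ _ (Real.exp_pos _) ε hε ((aPart_bound β Q hQ l g h).trans hg)
  intro x hx
  have h0 : β x < 0 := inv_lt_zero.1 hx
  have := (abs_le.1 (hb1 x)).1
  change (β x)⁻¹ ≤ -1
  have h1 : 1 ≤ (-β x)⁻¹ := (one_le_inv₀ (by linarith)).2 (by linarith)
  rw [inv_neg] at h1
  linarith

lemma lux_small {n : ℕ} (β : (Fin n → ℝ) → ℝ) (hβ : Measurable β) (hb1 : ∀ x, |β x| ≤ 1)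
    (ε : ℝ) (hε0 : 0 < ε) (hε1 : ε ≤ 1)
    (hε : volume {x | (β x)⁻¹ = 0} < 1 → ENNReal.ofReal ε ≤ (1 - volume {x | (β x)⁻¹ = 0}) / 2)
    (C : ℝ) (hC : ∀ x y : Fin n → ℝ, ∀ r : ℝ, 0 < r → r ≤ 1 → dist x y ≤ r →
      |β x - β y| * (-Real.log r) ≤ C) :
    ∃ K : ℝ, 0 < K ∧ ∀ (c : Fin n → ℝ) (r : ℝ), 0 < r → r ≤ 1 →
      luxNorm (fun x => (β x)⁻¹) ((Set.univ.pi fun i => Set.Icc (c i) (c i + r)).indicator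
        fun _ => (1:ℝ)) ≤ K * (r ^ n) ^ β c := by
  set k := n * C - Real.log ε with hk
  refine ⟨2 * Real.exp k, by positivity, fun c r hr hr1 => ?_⟩
  have hlog : Real.log r ≤ 0 := Real.log_nonpos hr.le hr1
  have hV : (r ^ n) ^ β c = Real.exp (n * Real.log r * β c) := by
    rw [Real.rpow_def_of_pos (by positivity), Real.log_pow]
  rw [hV, mul_assoc, ← Real.exp_add]
  have hle : Real.log ε ≤ 0 := Real.log_nonpos hε0.le hε1
  refine lux_le' β hβ hb1 _ (cube_meas c r) _ ε hε
    (fun _ => ENNReal.ofReal (ε * (r ^ n)⁻¹)) ?_ ?_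
  · intro x hx hx0
    apply ENNReal.ofReal_le_ofReal
    have hx1 := (abs_le.1 (hb1 x)).2
    have e : ε * (r ^ n)⁻¹ = Real.exp (Real.log ε - n * Real.log r) := by
      rw [Real.exp_sub, Real.exp_log hε0, ← Real.log_pow, Real.exp_log (by positivity)]
      rfl
    rw [e]
    apply Real.exp_le_exp.2
    rw [neg_le, le_div_iff₀ hx0]
    have h1 := hC x c r hr hr1 (cube_dist c r hr x hx)
    have h2 : (β c - β x) * (-Real.log r) ≤ C :=
      le_trans (mul_le_mul_of_nonneg_right (by rw [abs_sub_comm]; exact le_abs_self _) (by linarith)) h1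
    have h3 : n * ((β c - β x) * (-Real.log r)) ≤ n * C := by gcongr
    have h4 : (-Real.log ε) * β x ≤ -Real.log ε := mul_le_of_le_one_right (by linarith) hx1
    rw [hk]; nlinarith
  · rw [lintegral_const, Measure.restrict_apply_univ, cube_vol c r hr, ← ENNReal.ofReal_mul (by positivity)]
    apply ENNReal.ofReal_le_ofReal
    apply le_of_eq; field_simp

lemma lux_large_nonneg {n : ℕ} (β : (Fin n → ℝ) → ℝ) (hβ : Measurable β) (hb1 : ∀ x, |β x| ≤ 1)
    (ε : ℝ) (hε0 : 0 < ε) (hε1 : ε ≤ 1)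
    (hε : volume {x | (β x)⁻¹ = 0} < 1 → ENNReal.ofReal ε ≤ (1 - volume {x | (β x)⁻¹ = 0}) / 2)
    (C : ℝ) (hC0 : 0 < C) (b : ℝ) (hb : 0 ≤ b)
    (hC : ∀ x, |β x - b| ≤ C / Real.log (Real.exp 1 + ‖x‖)) :
    ∃ K : ℝ, 0 < K ∧ ∀ (c : Fin n → ℝ) (r : ℝ), 1 ≤ r →
      luxNorm (fun x => (β x)⁻¹) ((Set.univ.pi fun i => Set.Icc (c i) (c i + r)).indicator
        fun _ => (1:ℝ)) ≤ K * (r ^ n) ^ b := by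
  have hJ : ∫⁻ x : Fin n → ℝ, ENNReal.ofReal ((1 + ‖x‖) ^ (-((n:ℝ) + 1))) < ∞ :=
    finite_integral_one_add_norm (by simp)
  set J := (∫⁻ x : Fin n → ℝ, ENNReal.ofReal ((1 + ‖x‖) ^ (-((n:ℝ) + 1)))).toReal with hJd
  have hJ0 : 0 ≤ J := ENNReal.toReal_nonneg
  set m : ℝ := n + 1 with hm
  have hm0 : 0 < m := by positivity
  set k := Real.log ((1 + J) / ε) with hk
  have hk0 : 0 ≤ k := Real.log_nonneg (by rw [le_div_iff₀ hε0]; linarith)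
  have hek : Real.exp (-k) = ε / (1 + J) := by
    rw [Real.exp_neg, hk, Real.exp_log (by positivity)]; simp
  refine ⟨2 * Real.exp (k + C * m), by positivity, fun c r hr1 => ?_⟩
  have hr : 0 < r := by linarith
  have hlog : 0 ≤ Real.log r := Real.log_nonneg hr1
  have hV : (r ^ n) ^ b = Real.exp (n * Real.log r * b) := by
    rw [Real.rpow_def_of_pos (by positivity), Real.log_pow]
  rw [hV, mul_assoc, ← Real.exp_add]
  refine lux_le' β hβ hb1 _ (cube_meas c r) _ ε hε
    (fun x => ENNReal.ofReal (Real.exp (-k)) *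
      (ENNReal.ofReal ((r ^ n)⁻¹) + ENNReal.ofReal ((1 + ‖x‖) ^ (-m)))) ?_ ?_
  · intro x hx hx0
    have hx1 := (abs_le.1 (hb1 x)).2
    rw [← ENNReal.ofReal_add (by positivity) (by positivity), ← ENNReal.ofReal_mul (by positivity)]
    apply ENNReal.ofReal_le_ofReal
    have hL : 1 ≤ Real.log (Real.exp 1 + ‖x‖) := by
      rw [Real.le_log_iff_exp_le (by positivity)]; linarith [norm_nonneg x]
    have hLL : Real.log (1 + ‖x‖) ≤ Real.log (Real.exp 1 + ‖x‖) := by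
      apply Real.log_le_log (by positivity)
      linarith [Real.add_one_le_exp 1]
    have hxC := (abs_le.1 (hC x)).2
    set L := Real.log (Real.exp 1 + ‖x‖)
    set t := n * Real.log r with ht
    have ht0 : 0 ≤ t := by positivity
    have e1 : (r ^ n)⁻¹ = Real.exp (-t) := by
      rw [Real.exp_neg, ht, ← Real.log_pow, Real.exp_log (by positivity)]
    have e2 : Real.exp (-(m * L)) ≤ (1 + ‖x‖) ^ (-m) := by
      rw [Real.rpow_def_of_pos (by positivity)]
      apply Real.exp_le_exp.2
      nlinarith
    have hkb : k * β x ≤ k := mul_le_of_le_one_right hk0 hx1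
    have hCL : C / L * L = C := by field_simp
    have hCLp : 0 ≤ C / L := by positivity
    have hbx : β x ≤ b + C / L := by linarith
    rcases le_total t (m * L) with h | h
    · calc Real.exp (-((k + C * m + t * b) / β x)) ≤ Real.exp (-k) * Real.exp (-t) := by
            rw [← Real.exp_add]
            apply Real.exp_le_exp.2
            rw [neg_le, le_div_iff₀ hx0]
            have h1 : C / L * t ≤ C * m := by
              calc C / L * t ≤ C / L * (m * L) := by gcongr
                _ = C * m := by rw [← hCL]; field_simp
            have h2 : t * β x ≤ t * (b + C / L) := by gcongr
            nlinarith
        _ ≤ _ := by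
            rw [e1]; gcongr
            exact le_add_of_nonneg_right (by positivity)
    · calc Real.exp (-((k + C * m + t * b) / β x)) ≤ Real.exp (-k) * Real.exp (-(m * L)) := by
            rw [← Real.exp_add]
            apply Real.exp_le_exp.2
            rw [neg_le, le_div_iff₀ hx0]
            have h1 : m * L * (b + C / L) ≤ t * b + C * m := by
              have : m * L * (C / L) = C * m := by rw [← hCL]; field_simp
              nlinarith
            have h2 : m * L * β x ≤ m * L * (b + C / L) := by gcongr
            nlinarith
        _ ≤ _ := by
            gcongr
            exact e2.trans (le_add_of_nonneg_left (by positivity))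
  · rw [lintegral_const_mul' _ _ (by simp), lintegral_add_left (by fun_prop), lintegral_const,
      Measure.restrict_apply_univ, cube_vol c r hr, ← ENNReal.ofReal_mul (by positivity)]
    have h1 : ∫⁻ x in (Set.univ.pi fun i => Set.Icc (c i) (c i + r)),
        ENNReal.ofReal ((1 + ‖x‖) ^ (-m)) ≤ ENNReal.ofReal J := by
      rw [hJd, ENNReal.ofReal_toReal hJ.ne]
      exact setLIntegral_le_lintegral _ _
    calc _ ≤ ENNReal.ofReal (Real.exp (-k)) * (ENNReal.ofReal ((r ^ n)⁻¹ * r ^ n) + ENNReal.ofReal J) := by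
          gcongr
      _ = ENNReal.ofReal ε := by
          rw [← ENNReal.ofReal_add (by positivity) hJ0, ← ENNReal.ofReal_mul (by positivity), hek]
          congr 1
          rw [inv_mul_cancel₀ (by positivity)]; field_simp

set_option maxHeartbeats 1000000 in
lemma lux_large_neg {n : ℕ} (hn : 0 < n) (β : (Fin n → ℝ) → ℝ) (hβ : Measurable β) (hb1 : ∀ x, |β x| ≤ 1)
    (ε : ℝ) (hε0 : 0 < ε) (hε1 : ε ≤ 1)
    (hε : volume {x | (β x)⁻¹ = 0} < 1 → ENNReal.ofReal ε ≤ (1 - volume {x | (β x)⁻¹ = 0}) / 2)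
    (C : ℝ) (hC0 : 0 < C) (b : ℝ) (hb : b < 0)
    (hC : ∀ x, |β x - b| ≤ C / Real.log (Real.exp 1 + ‖x‖)) :
    ∃ K : ℝ, 0 < K ∧ ∀ (c : Fin n → ℝ) (r : ℝ), 1 ≤ r →
      luxNorm (fun x => (β x)⁻¹) ((Set.univ.pi fun i => Set.Icc (c i) (c i + r)).indicator
        fun _ => (1:ℝ)) ≤ K * (r ^ n) ^ b := by
  have hn' : (0:ℝ) < n := by exact_mod_cast hn
  set T0 := 2 * n * C / (-b) with hT0
  have hT0p : 0 < T0 := by have : 0 < -b := by linarith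
                           positivity
  have hbT : T0 * b = -(2 * n * C) := by have := hb.ne; rw [hT0]; field_simp
  have hle : Real.log ε ≤ 0 := Real.log_nonpos hε0.le hε1
  have hl3 : 0 < Real.log 3 := Real.log_pos (by norm_num)
  set k := 2 * n * C + T0 + Real.log 3 - Real.log ε with hk
  have hnC : 0 < 2 * n * C := by positivity
  refine ⟨2 * Real.exp k, by positivity, fun c r hr1 => ?_⟩
  have hr : 0 < r := by linarith
  have hlog : 0 ≤ Real.log r := Real.log_nonneg hr1
  have hV : (r ^ n) ^ b = Real.exp (n * Real.log r * b) := by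
    rw [Real.rpow_def_of_pos (by positivity), Real.log_pow]
  rw [hV, mul_assoc, ← Real.exp_add]
  set t := n * Real.log r with ht
  have ht0 : 0 ≤ t := by positivity
  have hrt : r ^ n = Real.exp t := by
    rw [ht, ← Real.log_pow, Real.exp_log (by positivity)]
  by_cases htT : t ≤ T0
  · refine lux_le' β hβ hb1 _ (cube_meas c r) _ ε hε
      (fun x => ENNReal.ofReal (Real.exp (Real.log ε - T0))) ?_ ?_
    · intro x hx hx0
      have hx1 := (abs_le.1 (hb1 x)).2
      apply ENNReal.ofReal_le_ofReal
      apply Real.exp_le_exp.2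
      rw [neg_le, le_div_iff₀ hx0]
      have h1 : T0 * b ≤ t * b := mul_le_mul_of_nonpos_right htT hb.le
      have h2 : (T0 - Real.log ε) * β x ≤ T0 - Real.log ε :=
        mul_le_of_le_one_right (by linarith) hx1
      rw [hk]; linarith
    · rw [lintegral_const, Measure.restrict_apply_univ, cube_vol c r hr, ← ENNReal.ofReal_mul (by positivity)]
      apply ENNReal.ofReal_le_ofReal
      rw [hrt, ← Real.exp_add]
      calc Real.exp (Real.log ε - T0 + t) ≤ Real.exp (Real.log ε) := Real.exp_le_exp.2 (by linarith)
        _ = ε := Real.exp_log hε0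
  push Not at htT
  have htp : 0 < t := by linarith
  set Q := (Set.univ.pi fun i => Set.Icc (c i) (c i + r)) with hQ
  unfold luxNorm
  rcases eq_empty_or_nonempty {η : ℝ | 0 < η ∧
      ∫⁻ x, ENNReal.ofReal ((|Q.indicator (fun _ => (1:ℝ)) x| / η) ^ (β x)⁻¹) ≤ 1} with h | ⟨η0, h0⟩
  · rw [h, Real.sInf_empty]; positivity
  refine (csInf_le ⟨0, fun y hy => hy.1.le⟩ h0).trans ?_
  obtain ⟨h0p, h0⟩ := h0
  rw [modular_eq (fun x => (β x)⁻¹) hβ.inv Q (cube_meas c r) _ h0p] at h0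
  by_contra hcon
  push Not at hcon
  have hlη : k + t * b < Real.log η0 := by
    rw [Real.lt_log_iff_exp_lt h0p]
    linarith [Real.exp_pos (k + t * b)]
  have hB : ∫⁻ x in Q \ Metric.ball 0 (r / 4), ENNReal.ofReal (3 * Real.exp (-t)) ≤
      (∫⁻ x, bPart (fun x => (β x)⁻¹) Q η0 x) := by
    rw [← lintegral_indicator ((cube_meas c r).diff Metric.isOpen_ball.measurableSet)]
    refine lintegral_mono fun x => ?_
    by_cases hx : x ∈ Q \ Metric.ball 0 (r / 4)
    swap
    · rw [indicator_of_notMem hx]; simp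
    have hxr : r / 4 ≤ ‖x‖ := by
      have := hx.2
      simpa using this
    have hL : t ≤ 2 * n * Real.log (Real.exp 1 + ‖x‖) := by
      have h1 : r ≤ (Real.exp 1 + ‖x‖) ^ 2 := by
        have := Real.add_one_le_exp 1
        nlinarith [sq_nonneg (1 - r / 4)]
      have h2 : Real.log r ≤ 2 * Real.log (Real.exp 1 + ‖x‖) := by
        have := Real.log_le_log hr h1
        rwa [Real.log_pow] at this
      rw [ht]; nlinarith
    have hxC := abs_le.1 (hC x)
    have hLp : 0 < Real.log (Real.exp 1 + ‖x‖) := by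
      by_contra h
      push Not at h
      nlinarith
    set L := Real.log (Real.exp 1 + ‖x‖)
    have hCL : C / L * t ≤ 2 * n * C := by
      calc C / L * t ≤ C / L * (2 * n * L) := by gcongr
        _ = 2 * n * C := by field_simp
    have hup : (β x - b) * t ≤ 2 * n * C := le_trans (by gcongr; exact hxC.2) hCL
    have hdn : -(2 * n * C) ≤ (β x - b) * t := by nlinarith [hxC.1]
    have hneg : β x < 0 := by
      by_contra h
      push Not at h
      have : 0 ≤ β x * t := by positivity
      have : t * b < T0 * b := mul_lt_mul_of_neg_right htT hb
      nlinarith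
    have hx1 := (abs_le.1 (hb1 x)).1
    unfold bPart
    rw [indicator_of_mem hx, indicator_of_mem (show x ∈ Q ∩ {x | (β x)⁻¹ < 0} from ⟨hx.1, inv_lt_zero.2 hneg⟩)]
    apply ENNReal.ofReal_le_ofReal
    have e : 3 * Real.exp (-t) = Real.exp (Real.log 3 - t) := by
      rw [sub_eq_add_neg, Real.exp_add, Real.exp_log (by norm_num)]
    rw [e, Real.rpow_def_of_pos h0p]
    apply Real.exp_le_exp.2
    have : Real.log η0 * -(β x)⁻¹ = Real.log η0 / (-β x) := by
      rw [div_eq_mul_inv, inv_neg]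
    rw [this, le_div_iff₀ (by linarith)]
    have h5 : Real.log 3 * (-β x) ≤ Real.log 3 := mul_le_of_le_one_right hl3.le (by linarith)
    rw [hk] at hlη
    have e6 : (Real.log 3 - t) * (-β x) = Real.log 3 * (-β x) + (β x - b) * t + t * b := by ring
    rw [e6]
    linarith
  have hvol : ENNReal.ofReal (r ^ n / 2) ≤ volume (Q \ Metric.ball 0 (r / 4)) := by
    refine le_trans ?_ le_measure_sdiff
    rw [cube_vol c r hr, Real.volume_pi_ball _ (by positivity), Fintype.card_fin,
      ← ENNReal.ofReal_sub _ (by positivity)]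
    apply ENNReal.ofReal_le_ofReal
    have e : (2 * (r / 4)) ^ n = r ^ n * (1 / 2) ^ n := by
      rw [← mul_pow]; congr 1; ring
    have h2 : (1 / 2 : ℝ) ^ n ≤ (1 / 2) ^ 1 := pow_le_pow_of_le_one (by norm_num) (by norm_num) hn
    rw [e]
    have : 0 < r ^ n := by positivity
    nlinarith
  rw [lintegral_const, Measure.restrict_apply_univ] at hB
  have h1 : ENNReal.ofReal (3 * Real.exp (-t)) * ENNReal.ofReal (r ^ n / 2) ≤ 1 :=
    le_trans (le_trans (by gcongr) hB) (le_trans le_add_self h0)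
  rw [← ENNReal.ofReal_mul (by positivity), ENNReal.ofReal_le_one, hrt] at h1
  have : Real.exp (-t) * Real.exp t = 1 := by rw [← Real.exp_add]; simp
  nlinarith

lemma exists_eps (c : ℝ≥0∞) : ∃ ε : ℝ, 0 < ε ∧ ε ≤ 1 ∧ (c < 1 → ENNReal.ofReal ε ≤ (1 - c) / 2) := by
  by_cases h : c < 1
  · have h1 : (1 - c) / 2 ≤ 1 := by
      refine le_trans ENNReal.half_le_self tsub_le_self
    have hne : (1 - c) / 2 ≠ ∞ := (h1.trans_lt ENNReal.one_lt_top).ne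
    refine ⟨((1 - c) / 2).toReal, ?_, ?_, fun _ => ?_⟩
    · refine ENNReal.toReal_pos ?_ hne
      have := tsub_pos_of_lt h
      exact (ENNReal.half_pos this.ne').ne'
    · exact ENNReal.toReal_le_of_le_ofReal zero_le_one (by simpa using h1)
    · rw [ENNReal.ofReal_toReal hne]
  · exact ⟨1, one_pos, le_rfl, fun h' => absurd h' h⟩

lemma lux_main {n : ℕ} (hn : 0 < n) (β : (Fin n → ℝ) → ℝ) (hβ : Measurable β) (hb1 : ∀ x, |β x| ≤ 1)
    (C : ℝ) (hC : ∀ x y : Fin n → ℝ, ∀ r : ℝ, 0 < r → r ≤ 1 → dist x y ≤ r →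
      |β x - β y| * (-Real.log r) ≤ C)
    (C' : ℝ) (hC0' : 0 < C') (b : ℝ)
    (hC' : ∀ x, |β x - b| ≤ C' / Real.log (Real.exp 1 + ‖x‖)) :
    ∃ K : ℝ, 0 < K ∧ ∀ (c : Fin n → ℝ) (r : ℝ), 0 < r →
      luxNorm (fun x => (β x)⁻¹) ((Set.univ.pi fun i => Set.Icc (c i) (c i + r)).indicator
        fun _ => (1:ℝ)) ≤ K * (r ^ n) ^ (if r ≤ 1 then β c else b) := by
  obtain ⟨ε, h0, h1, h2⟩ := exists_eps (volume {x | (β x)⁻¹ = 0})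
  obtain ⟨K1, hK1, hs⟩ := lux_small β hβ hb1 ε h0 h1 h2 C hC
  have : ∃ K : ℝ, 0 < K ∧ ∀ (c : Fin n → ℝ) (r : ℝ), 1 ≤ r →
      luxNorm (fun x => (β x)⁻¹) ((Set.univ.pi fun i => Set.Icc (c i) (c i + r)).indicator
        fun _ => (1:ℝ)) ≤ K * (r ^ n) ^ b := by
    rcases le_or_gt 0 b with hb | hb
    · exact lux_large_nonneg β hβ hb1 ε h0 h1 h2 C' hC0' b hb hC'
    · exact lux_large_neg hn β hβ hb1 ε h0 h1 h2 C' hC0' b hb hC'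
  obtain ⟨K2, hK2, hl⟩ := this
  refine ⟨K1 + K2, by positivity, fun c r hr => ?_⟩
  split_ifs with h
  · exact (hs c r hr h).trans (by gcongr; linarith)
  · exact (hl c r (le_of_not_ge h)).trans (by gcongr; linarith)

lemma luxNorm_nonneg {n : ℕ} (q f : (Fin n → ℝ) → ℝ) : 0 ≤ luxNorm q f :=
  Real.sInf_nonneg fun _ h => h.1.le

lemma inv_lip (a b : ℝ) (ha : 1 ≤ a) (hb : 1 ≤ b) : |1 / a - 1 / b| ≤ |a - b| := by
  have e : 1 / a - 1 / b = (b - a) / (a * b) := by field_simp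
  rw [e, abs_div, abs_sub_comm, abs_of_pos (show 0 < a * b by positivity)]
  exact div_le_self (abs_nonneg _) (by nlinarith)

/-- if `0 ≤ γ < n`, `p(·) ∈ 𝒞^{log}(ℝⁿ) ∩ 𝒫(ℝⁿ)` and
`1/q(x) = 1/p(x) − γ/n`, then the constant weight `1` is in `𝒜_{p(·),q(·)}^γ`:
`‖χ_Q‖_{q(·)} ‖χ_Q‖_{p'(·)} ≤ C |Q|^{1−γ/n}` for every cube `Q`. -/
theorem const_weight_in_Apq {n : ℕ} (hn : 0 < n) (γ : ℝ) (hγ0 : 0 ≤ γ) (hγn : γ < n)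
    (p q : (Fin n → ℝ) → ℝ) (hpmeas : Measurable p)
    (pm pp : ℝ) (hpm : 1 < pm) (hpb : ∀ x, pm ≤ p x ∧ p x ≤ pp)
    (Cloc : ℝ) (hCloc : 0 < Cloc)
    (hlog : ∀ x y : Fin n → ℝ, dist x y ≤ 1/2 →
      |p x - p y| ≤ Cloc / (-Real.log (dist x y)))
    (pinf : ℝ) (Cinf : ℝ) (hCinf : 0 < Cinf)
    (hinf : ∀ x : Fin n → ℝ, |p x - pinf| ≤ Cinf / Real.log (Real.exp 1 + ‖x‖))
    (hpq : ∀ x, 1 / q x = 1 / p x - γ / n) :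
    ∃ C : ℝ, 0 < C ∧ ∀ Q : Set (Fin n → ℝ), IsCube Q →
      luxNorm q (Q.indicator fun _ => (1:ℝ)) *
        luxNorm (fun x => p x / (p x - 1)) (Q.indicator fun _ => (1:ℝ)) ≤
      C * (volume Q).toReal ^ (1 - γ / n) := by
  have hn' : (0:ℝ) < n := by exact_mod_cast hn
  have hpinf : 1 ≤ pinf := by
    by_contra hlt
    push Not at hlt
    set d := (1 - pinf) with hd
    have hdp : 0 < d := by linarith
    have : Nonempty (Fin n) := ⟨⟨0, hn⟩⟩
    have h := hinf (fun _ => Real.exp (Cinf / d))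
    rw [pi_norm_const, Real.norm_eq_abs, Real.abs_exp] at h
    have hL : Cinf / d ≤ Real.log (Real.exp 1 + Real.exp (Cinf / d)) := by
      rw [Real.le_log_iff_exp_le (by positivity)]; linarith [Real.exp_pos 1]
    have hq : 0 < Cinf / d := by positivity
    have h2 : Cinf / Real.log (Real.exp 1 + Real.exp (Cinf / d)) ≤ d := by
      rw [div_le_iff₀ (by linarith)]
      rw [div_le_iff₀ hdp] at hL
      linarith
    have h3 := (abs_le.1 (h.trans h2)).2
    have h4 := (hpb (fun _ => Real.exp (Cinf / d))).1
    linarith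
  have hp1 : ∀ x, 1 < p x := fun x => lt_of_lt_of_le hpm (hpb x).1
  have hpi0 : ∀ x, 0 < 1 / p x := fun x => by have := hp1 x; positivity
  have hpi1 : ∀ x, 1 / p x ≤ 1 := fun x => by
    have := hp1 x
    rw [div_le_one (by linarith)]; linarith
  have hpp : pm ≤ pp := (hpb 0).1.trans (hpb 0).2
  have hloc : ∀ x y : Fin n → ℝ, ∀ r : ℝ, 0 < r → r ≤ 1 → dist x y ≤ r →
      |1 / p x - 1 / p y| * (-Real.log r) ≤ Cloc + (pp - pm) * Real.log 2 := by
    intro x y r hr hr1 hd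
    have hlr : 0 ≤ -Real.log r := by linarith [Real.log_nonpos hr.le hr1]
    have hl2 : 0 < Real.log 2 := Real.log_pos (by norm_num)
    have h0 : 0 ≤ (pp - pm) * Real.log 2 := mul_nonneg (by linarith) hl2.le
    refine (mul_le_mul_of_nonneg_right (inv_lip _ _ (hp1 x).le (hp1 y).le) hlr).trans ?_
    by_cases hr2 : r ≤ 1 / 2
    · rcases (dist_nonneg (x := x) (y := y)).eq_or_lt with h | h
      · have : x = y := dist_eq_zero.1 h.symm
        rw [this]; simp; linarith
      · have h1 := hlog x y (hd.trans hr2)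
        have h2 : Real.log (dist x y) ≤ Real.log r := Real.log_le_log h hd
        have h3 : Real.log r < 0 := Real.log_neg hr (by linarith)
        rw [le_div_iff₀ (by linarith)] at h1
        have h4 : |p x - p y| * (-Real.log r) ≤ |p x - p y| * (-Real.log (dist x y)) := by gcongr
        linarith
    · push Not at hr2
      have h1 : |p x - p y| ≤ pp - pm := by
        rw [abs_le]; constructor <;> linarith [(hpb x).1, (hpb x).2, (hpb y).1, (hpb y).2]
      have h2 : -Real.log r ≤ Real.log 2 := by
        have := Real.log_le_log (by norm_num) hr2.le
        rw [one_div, Real.log_inv] at this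
        linarith
      have : |p x - p y| * (-Real.log r) ≤ (pp - pm) * Real.log 2 :=
        mul_le_mul h1 h2 hlr (by linarith)
      linarith
  have hgl : ∀ x : Fin n → ℝ, |1 / p x - 1 / pinf| ≤ Cinf / Real.log (Real.exp 1 + ‖x‖) :=
    fun x => (inv_lip _ _ (hp1 x).le hpinf).trans (hinf x)
  have hg0 : 0 ≤ γ / n := by positivity
  have hg1 : γ / n < 1 := by rw [div_lt_one hn']; exact hγn
  obtain ⟨K1, hK1, H1⟩ := lux_main hn (fun x => 1 / p x - γ / n) (by fun_prop)
    (fun x => by rw [abs_le]; constructor <;> linarith [hpi0 x, hpi1 x])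
    _ (fun x y r hr hr1 hd => by
      simpa only [sub_sub_sub_cancel_right] using hloc x y r hr hr1 hd)
    Cinf hCinf (1 / pinf - γ / n) (fun x => by
      simpa only [sub_sub_sub_cancel_right] using hgl x)
  obtain ⟨K2, hK2, H2⟩ := lux_main hn (fun x => 1 - 1 / p x) (by fun_prop)
    (fun x => by rw [abs_le]; constructor <;> linarith [hpi0 x, hpi1 x])
    _ (fun x y r hr hr1 hd => by
      rw [_root_.sub_sub_sub_cancel_left, abs_sub_comm]; exact hloc x y r hr hr1 hd)
    Cinf hCinf (1 - 1 / pinf) (fun x => by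
      rw [_root_.sub_sub_sub_cancel_left, abs_sub_comm]; exact hgl x)
  have eq1 : q = fun x => (1 / p x - γ / n)⁻¹ := by
    ext x; rw [← hpq x]; simp
  have eq2 : (fun x => p x / (p x - 1)) = fun x => (1 - 1 / p x)⁻¹ := by
    ext x
    have := hp1 x
    have h1 : p x ≠ 0 := by linarith
    have h2 : p x - 1 ≠ 0 := by linarith
    rw [one_sub_div h1, inv_div]
  refine ⟨K1 * K2, by positivity, ?_⟩
  rintro Q ⟨c, r, hr, rfl⟩
  rw [cube_vol c r hr, ENNReal.toReal_ofReal (by positivity), eq1, eq2]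
  refine (mul_le_mul (H1 c r hr) (H2 c r hr) (luxNorm_nonneg _ _) (by positivity)).trans (le_of_eq ?_)
  rw [mul_mul_mul_comm, ← Real.rpow_add (by positivity)]
  congr 2
  split_ifs <;> ring
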